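/- arXiv:math/9908005 — 3 statements merged into one kernel-verified Lean document; each statement's English description precedes it below -/
import Mathlib

section
/- For all m ≥ 1 and n ≥ 1, the sum over all m-multipartitions λ of n of the square of the number of standard tableaux of shape λ equals m^n · n!. -/
noncomputable section
open scoped Classical
open scoped Fin.NatCast

namespace Cyclo

/-- The defining relations of the cyclotomic Hecke algebra of type `G(m,1,n)`.
Generator `i : Fin n` corresponds to `a_{i+1}` of the paper. -/
inductive Rel (k : Type) [Field k] (m n : ℕ) (v : Fin m → k) (q : k) :
    FreeAlgebra k (Fin n) → FreeAlgebra k (Fin n) → Prop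
  | cyclo (i : Fin n) (hi : i.1 = 0) :
      Rel k m n v q
        ((List.ofFn fun j : Fin m =>
          (FreeAlgebra.ι k i - algebraMap k (FreeAlgebra k (Fin n)) (v j))).prod) 0
  | quad (i : Fin n) (hi : 1 ≤ i.1) :
      Rel k m n v q
        ((FreeAlgebra.ι k i - algebraMap k (FreeAlgebra k (Fin n)) q) * (FreeAlgebra.ι k i + 1)) 0
  | braid0 (i j : Fin n) (hi : i.1 = 0) (hj : j.1 = 1) :
      Rel k m n v q
        (FreeAlgebra.ι k i * FreeAlgebra.ι k j * FreeAlgebra.ι k i * FreeAlgebra.ι k j)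
        (FreeAlgebra.ι k j * FreeAlgebra.ι k i * FreeAlgebra.ι k j * FreeAlgebra.ι k i)
  | comm (i j : Fin n) (h : i.1 + 2 ≤ j.1) :
      Rel k m n v q (FreeAlgebra.ι k i * FreeAlgebra.ι k j)
        (FreeAlgebra.ι k j * FreeAlgebra.ι k i)
  | braid (i j : Fin n) (hi : 1 ≤ i.1) (hj : j.1 = i.1 + 1) :
      Rel k m n v q
        (FreeAlgebra.ι k j * FreeAlgebra.ι k i * FreeAlgebra.ι k j)
        (FreeAlgebra.ι k i * FreeAlgebra.ι k j * FreeAlgebra.ι k i)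

/-- The cyclotomic Hecke algebra `H_n(v_1,…,v_m;q)` of type `G(m,1,n)`. -/
def CH (k : Type) [Field k] (m n : ℕ) (v : Fin m → k) (q : k) : Type :=
  RingQuot (Rel k m n v q)

instance (k : Type) [Field k] (m n : ℕ) (v : Fin m → k) (q : k) : Ring (CH k m n v q) :=
  inferInstanceAs (Ring (RingQuot (Rel k m n v q)))

instance (k : Type) [Field k] (m n : ℕ) (v : Fin m → k) (q : k) : Algebra k (CH k m n v q) :=
  inferInstanceAs (Algebra k (RingQuot (Rel k m n v q)))

variable (k : Type) [Field k] (m n : ℕ) (v : Fin m → k) (q : k)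

/-- `gen k m n v q t` is the generator `a_{t+1}` (so `gen 0 = a_1`, …, `gen (n-1) = a_n`). -/
def gen [NeZero n] (t : ℕ) : CH k m n v q :=
  RingQuot.mkAlgHom k (Rel k m n v q) (FreeAlgebra.ι k ((t : Fin n)))

/-- `murphyAux k m n v q t` is the Murphy element `L_{t+1}`. -/
def murphyAux [NeZero n] : ℕ → CH k m n v q
  | 0 => gen k m n v q 0
  | t + 1 => q⁻¹ • (gen k m n v q (t + 1) * murphyAux t * gen k m n v q (t + 1))

/-- The Murphy element `L_{i+1}`, for `i : Fin n`. -/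
def murphy [NeZero n] (i : Fin n) : CH k m n v q := murphyAux k m n v q i.1

/-- The product of adjacent transpositions encoded by a list of `0`-based indices:
`t` encodes the transposition `(t, t+1)` (in `0`-based labels), i.e. `s_{t+1}` of the paper. -/
def swapProd [NeZero n] (l : List ℕ) : Equiv.Perm (Fin n) :=
  (l.map fun t => Equiv.swap ((t : Fin n)) (((t + 1 : ℕ) : Fin n))).prod

/-- The corresponding product of generators of the Hecke algebra: the index `t`
(encoding `s_{t+1}`) contributes the generator `a_{t+2} = gen (t+1)`. -/
def genProd [NeZero n] (l : List ℕ) : CH k m n v q :=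
  (l.map fun t => gen k m n v q (t + 1)).prod

/-- `l` is a reduced word for the permutation `w`. -/
def IsReducedWord [NeZero n] (l : List ℕ) (w : Equiv.Perm (Fin n)) : Prop :=
  (∀ t ∈ l, t + 1 < n) ∧ swapProd n l = w ∧
    ∀ l' : List ℕ, (∀ t ∈ l', t + 1 < n) → swapProd n l' = w → l.length ≤ l'.length

/-- `aw` assigns to each permutation `w` the element `a_w` computed from a(ny) reduced word. -/
def IsAW [NeZero n] (aw : Equiv.Perm (Fin n) → CH k m n v q) : Prop :=
  ∀ (w : Equiv.Perm (Fin n)) (l : List ℕ), IsReducedWord n l w → aw w = genProd k m n v q l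



/-- An `m`-multipartition of `n`:  `part c` is the partition `λ^{(c+1)}`
(so `c = m-1` corresponds to the component `λ^{(m)}` of the paper), given by its
(weakly decreasing) list of row lengths `part c 0, part c 1, …`. -/
structure Multipartition (m n : ℕ) where
  part : Fin m → ℕ → ℕ
  mono : ∀ c i, part c (i + 1) ≤ part c i
  bound : ∀ c i, n ≤ i → part c i = 0
  total : (∑ c : Fin m, ∑ i ∈ Finset.range n, part c i) = n

namespace Multipartition

variable {m n : ℕ}

/-- The size `|λ^{(c+1)}|` of a component. -/
def compSize (Λ : Multipartition m n) (c : Fin m) : ℕ :=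
  ∑ i ∈ Finset.range n, Λ.part c i

/-- `|λ^{(1)}| + ⋯ + |λ^{(kk)}|`. -/
def compSizeUpto (Λ : Multipartition m n) (kk : ℕ) : ℕ :=
  ∑ c ∈ Finset.range kk, (if h : c < m then Λ.compSize ⟨c, h⟩ else 0)

/-- The statistic `Σ_{j>k}|λ^{(j)}| + Σ_{j=1}^{l} λ^{(k)}_j` of the dominance order,
where the component `k` (`1`-based) is `c.1 + 1`. -/
def domStat (Λ : Multipartition m n) (c : Fin m) (l : ℕ) : ℕ :=
  (∑ c' ∈ Finset.univ.filter (fun c' : Fin m => c.1 < c'.1), Λ.compSize c') +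
    ∑ j ∈ Finset.range l, Λ.part c j

/-- The dominance order `Λ ⊵ M`. -/
def Dominates (Λ M : Multipartition m n) : Prop :=
  ∀ (c : Fin m) (l : ℕ), M.domStat c l ≤ Λ.domStat c l

/-- Strict dominance `Λ ▷ M`. -/
def StrictDom (Λ M : Multipartition m n) : Prop :=
  Λ.Dominates M ∧ Λ ≠ M

/-- The (0-based) entry of the canonical tableau `t^Λ` in the box in row `i`, column `j`
of component `c`: the boxes are filled row by row, starting with the rows of `λ^{(m)}`,
then those of `λ^{(m-1)}`, and so on. -/
def canonEntry (Λ : Multipartition m n) (c : Fin m) (i j : ℕ) : ℕ :=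
  (∑ c' ∈ Finset.univ.filter (fun c' : Fin m => c.1 < c'.1), Λ.compSize c') +
    (∑ i' ∈ Finset.range i, Λ.part c i') + j

end Multipartition

/-- A standard tableau of shape `Λ`, with (0-based) entries `0, …, n-1`:
`entry c i j` is the entry in the box in row `i`, column `j` of component `c`
(and is normalised to `0` outside the boxes of `Λ`). -/
structure StdTableau {m n : ℕ} (Λ : Multipartition m n) where
  entry : Fin m → ℕ → ℕ → ℕ
  lt_n : ∀ c i j, j < Λ.part c i → entry c i j < n
  inj : ∀ c i j c' i' j', j < Λ.part c i → j' < Λ.part c' i' →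
    entry c i j = entry c' i' j' → (c, i, j) = (c', i', j')
  surj : ∀ x, x < n → ∃ c i j, j < Λ.part c i ∧ entry c i j = x
  row : ∀ c i j, j + 1 < Λ.part c i → entry c i j < entry c i (j + 1)
  col : ∀ c i j, j < Λ.part c (i + 1) → entry c i j < entry c (i + 1) j
  outside : ∀ c i j, ¬ j < Λ.part c i → entry c i j = 0

variable (k : Type) [Field k] (m n : ℕ)

/-- `d` assigns to each standard tableau `T` of each shape `Λ` the permutation `d(T)`
sending, box by box, the entry of the canonical tableau `t^Λ` to the entry of `T`. -/
def IsD [NeZero n] (d : ∀ Λ : Multipartition m n, StdTableau Λ → Equiv.Perm (Fin n)) : Prop :=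
  ∀ (Λ : Multipartition m n) (T : StdTableau Λ) (c : Fin m) (i j : ℕ), j < Λ.part c i →
    d Λ T ((Λ.canonEntry c i j : ℕ) : Fin n) = ((T.entry c i j : ℕ) : Fin n)

/-- Membership in the row stabiliser `S_Λ` of the canonical tableau `t^Λ`. -/
def InRowStab [NeZero n] (Λ : Multipartition m n) (w : Equiv.Perm (Fin n)) : Prop :=
  ∀ (c : Fin m) (i j : ℕ), j < Λ.part c i →
    ∃ j', j' < Λ.part c i ∧
      w ((Λ.canonEntry c i j : ℕ) : Fin n) = ((Λ.canonEntry c i j' : ℕ) : Fin n)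


variable (k : Type) [Field k] (m n : ℕ) (v : Fin m → k) (q : k)

open Multipartition

/-- The element `x_Λ = Σ_{w ∈ S_Λ} a_w`, where `aw` computes the elements `a_w`. -/
def xlam [NeZero n] (aw : Equiv.Perm (Fin n) → CH k m n v q) (Λ : Multipartition m n) :
    CH k m n v q :=
  ∑ w : Equiv.Perm (Fin n), if InRowStab m n Λ w then aw w else 0

/-- `a_kk = n − |λ^{(1)}| − ⋯ − |λ^{(kk)}|`. -/
def aVal (Λ : Multipartition m n) (kk : ℕ) : ℕ := n - Λ.compSizeUpto kk

/-- The element `u_a = ∏_{kk} (L_1 − v_kk)(L_2 − v_kk)⋯(L_{a_kk} − v_kk)`. -/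
def ua [NeZero n] (Λ : Multipartition m n) : CH k m n v q :=
  (List.ofFn fun kk : Fin m =>
    (List.ofFn fun ii : Fin n =>
      if ii.1 < aVal m n Λ (kk.1 + 1) then
        murphy k m n v q ii - algebraMap k (CH k m n v q) (v kk)
      else 1).prod).prod

/-- The element `m_Λ = x_Λ u_a`. -/
def mlam [NeZero n] (aw : Equiv.Perm (Fin n) → CH k m n v q) (Λ : Multipartition m n) :
    CH k m n v q :=
  xlam k m n v q aw Λ * ua k m n v q Λ

/-- The element `m_{st} = a_{d(s)}^* ⬝ m_Λ ⬝ a_{d(t)}`;  here `aw` computes the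
elements `a_w`, `σ` is the `*` anti-involution and `d` computes the permutations `d(t)`. -/
def mst [NeZero n] (aw : Equiv.Perm (Fin n) → CH k m n v q) (σ : CH k m n v q →ₗ[k] CH k m n v q)
    (d : ∀ Λ : Multipartition m n, StdTableau Λ → Equiv.Perm (Fin n))
    {Λ : Multipartition m n} (s t : StdTableau Λ) : CH k m n v q :=
  σ (aw (d Λ s)) * mlam k m n v q aw Λ * aw (d Λ t)

/-- `σ` is the `*` anti-involution: the `k`-linear anti-automorphism fixing the generators. -/
def IsStar [NeZero n] (σ : CH k m n v q →ₗ[k] CH k m n v q) : Prop :=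
  σ 1 = 1 ∧ (∀ x y, σ (x * y) = σ y * σ x) ∧ ∀ t, t < n → σ (gen k m n v q t) = gen k m n v q t

/-- The set of elements `m_{uv}`, for `u, v` standard tableaux of a common shape `M ▷ Λ`. -/
def IsetSet [NeZero n] (aw : Equiv.Perm (Fin n) → CH k m n v q)
    (σ : CH k m n v q →ₗ[k] CH k m n v q)
    (d : ∀ Λ : Multipartition m n, StdTableau Λ → Equiv.Perm (Fin n))
    (Λ : Multipartition m n) : Set (CH k m n v q) :=
  {x | ∃ (M : Multipartition m n) (_ : M.StrictDom Λ) (u v' : StdTableau M),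
    x = mst k m n v q aw σ d u v'}

/-- `I_Λ`, the `k`-span of the `m_{uv}` with shape strictly dominating `Λ`. -/
def Ilam [NeZero n] (aw : Equiv.Perm (Fin n) → CH k m n v q)
    (σ : CH k m n v q →ₗ[k] CH k m n v q)
    (d : ∀ Λ : Multipartition m n, StdTableau Λ → Equiv.Perm (Fin n))
    (Λ : Multipartition m n) : Submodule k (CH k m n v q) :=
  Submodule.span k (IsetSet k m n v q aw σ d Λ)

/-- The image `z_Λ h` of `m_Λ h` in the quotient `H_n / I_Λ`. -/
def zh [NeZero n] (aw : Equiv.Perm (Fin n) → CH k m n v q)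
    (σ : CH k m n v q →ₗ[k] CH k m n v q)
    (d : ∀ Λ : Multipartition m n, StdTableau Λ → Equiv.Perm (Fin n))
    (Λ : Multipartition m n) (h : CH k m n v q) :
    CH k m n v q ⧸ Ilam k m n v q aw σ d Λ :=
  Submodule.Quotient.mk (mlam k m n v q aw Λ * h)

/-- The Specht module `S^Λ = z_Λ ⬝ (H_n/I_Λ)`, as a `k`-submodule of `H_n / I_Λ`. -/
def Specht [NeZero n] (aw : Equiv.Perm (Fin n) → CH k m n v q)
    (σ : CH k m n v q →ₗ[k] CH k m n v q)
    (d : ∀ Λ : Multipartition m n, StdTableau Λ → Equiv.Perm (Fin n))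
    (Λ : Multipartition m n) :
    Submodule k (CH k m n v q ⧸ Ilam k m n v q aw σ d Λ) :=
  Submodule.span k (Set.range (zh k m n v q aw σ d Λ))

/-- The generator `z_Λ h` as an element of the Specht module. -/
def zhS [NeZero n] (aw : Equiv.Perm (Fin n) → CH k m n v q)
    (σ : CH k m n v q →ₗ[k] CH k m n v q)
    (d : ∀ Λ : Multipartition m n, StdTableau Λ → Equiv.Perm (Fin n))
    (Λ : Multipartition m n) (h : CH k m n v q) :
    Specht k m n v q aw σ d Λ :=
  ⟨zh k m n v q aw σ d Λ h, Submodule.subset_span ⟨h, rfl⟩⟩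


/-! ### Proof: the poset of multipartitions is an `m`-differential poset -/

/-- Monotone shapes. -/
def ShMono {a : ℕ} (p : Fin a × ℕ → ℕ) : Prop := ∀ c i, p (c, i + 1) ≤ p (c, i)

/-- Unit vector. -/
def ee {a : ℕ} (r : Fin a × ℕ) : Fin a × ℕ → ℕ := fun x => if x = r then 1 else 0

/-- Rows with index less than `N`. -/
def rowsN (a N : ℕ) : Finset (Fin a × ℕ) := Finset.univ ×ˢ Finset.range N

/-- Tableaux as plain entry functions. -/
structure IsT {a : ℕ} (b : ℕ) (p : Fin a × ℕ → ℕ) (t : Fin a → ℕ → ℕ → ℕ) : Prop where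
  mono : ShMono p
  lt_n : ∀ c i j, j < p (c, i) → t c i j < b
  inj : ∀ c i j c' i' j', j < p (c, i) → j' < p (c', i') →
    t c i j = t c' i' j' → c = c' ∧ i = i' ∧ j = j'
  surj : ∀ x, x < b → ∃ c i j, j < p (c, i) ∧ t c i j = x
  row : ∀ c i j, j + 1 < p (c, i) → t c i j < t c i (j + 1)
  col : ∀ c i j, j < p (c, i + 1) → t c i j < t c (i + 1) j
  outside : ∀ c i j, ¬ j < p (c, i) → t c i j = 0

/-- Update one entry. -/
def upd {a : ℕ} (t : Fin a → ℕ → ℕ → ℕ) (r : Fin a × ℕ) (j v : ℕ) : Fin a → ℕ → ℕ → ℕ :=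
  fun c' i' j' => if (c', i') = r ∧ j' = j then v else t c' i' j'

lemma IsT.le_entry {a b : ℕ} {p : Fin a × ℕ → ℕ} {t : Fin a → ℕ → ℕ → ℕ} (h : IsT b p t)
    (c : Fin a) (i : ℕ) : 0 < p (c, i) → i ≤ t c i 0 := by
  induction i with
  | zero => intro _; omega
  | succ i ih =>
    intro hp
    have h1 := h.mono c i
    have h2 := h.col c i 0 hp
    have := ih (by omega)
    omega

lemma IsT.bound {a b : ℕ} {p : Fin a × ℕ → ℕ} {t : Fin a → ℕ → ℕ → ℕ} (h : IsT b p t)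
    (c : Fin a) (i : ℕ) (hi : b ≤ i) : p (c, i) = 0 := by
  by_contra hne
  have h1 := h.le_entry c i (by omega)
  have h2 := h.lt_n c i 0 (by omega)
  omega

lemma sub_ee_add {a : ℕ} {p : Fin a × ℕ → ℕ} {r : Fin a × ℕ} (h : 0 < p r) :
    p - ee r + ee r = p := by
  funext x
  simp only [Pi.add_apply, Pi.sub_apply, ee]
  split_ifs with hx
  · subst hx; omega
  · omega

lemma add_ee_sub {a : ℕ} (p : Fin a × ℕ → ℕ) (r : Fin a × ℕ) :
    p + ee r - ee r = p := by
  funext x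
  simp only [Pi.add_apply, Pi.sub_apply, ee]
  omega

lemma IsT.restrict {a b : ℕ} {p : Fin a × ℕ → ℕ} {t : Fin a → ℕ → ℕ → ℕ}
    (h : IsT (b + 1) p t) :
    ∃ r, 0 < p r ∧ t r.1 r.2 (p r - 1) = b ∧ IsT b (p - ee r) (upd t r (p r - 1) 0) := by
  obtain ⟨c, i, j, hj, ht⟩ := h.surj b (by omega)
  have hjp : p (c, i) = j + 1 := by
    by_contra hne
    have h1 := h.row c i j (by omega)
    have h2 := h.lt_n c i (j + 1) (by omega)
    omega
  have hcol : p (c, i + 1) ≤ j := by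
    by_contra hne
    have h1 := h.col c i j (by omega)
    have h2 := h.lt_n c (i + 1) j (by omega)
    omega
  have key : ∀ c' i' j', (j' < (p - ee (c, i)) (c', i')) ↔
      (j' < p (c', i') ∧ ¬ ((c', i') = (c, i) ∧ j' = j)) := by
    intro c' i' j'
    simp only [Pi.sub_apply, ee]
    split_ifs with hx
    · rw [hx, hjp]; constructor
      · intro h; exact ⟨by omega, by simp; omega⟩
      · rintro ⟨h1, h2⟩
        simp at h2; omega
    · simp [hx]
  have kv : ∀ c' i' j', (j' < (p - ee (c, i)) (c', i')) →
      upd t (c, i) j 0 c' i' j' = t c' i' j' := by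
    intro c' i' j' hh
    exact if_neg ((key _ _ _).1 hh).2
  refine ⟨(c, i), by omega, by simpa [hjp] using ht, ?_⟩
  rw [show p (c, i) - 1 = j by omega]
  refine ⟨?_, ?_, ?_, ?_, ?_, ?_, ?_⟩
  · intro c' i'
    have := h.mono c' i'
    simp only [Pi.sub_apply, ee]
    by_cases h1 : (c', i') = (c, i)
    · simp only [Prod.mk.injEq] at h1
      obtain ⟨rfl, rfl⟩ := h1
      simp; omega
    · rw [if_neg h1]; omega
  · intro c' i' j' hh
    rw [kv _ _ _ hh]
    obtain ⟨h1, h2⟩ := (key _ _ _).1 hh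
    have h3 := h.lt_n _ _ _ h1
    have h4 : t c' i' j' ≠ b := by
      intro h5
      obtain ⟨rfl, rfl, rfl⟩ := h.inj c' i' j' c i j h1 hj (by omega)
      exact h2 ⟨rfl, rfl⟩
    omega
  · intro c1 i1 j1 c2 i2 j2 h1 h2 h3
    rw [kv _ _ _ h1, kv _ _ _ h2] at h3
    exact h.inj _ _ _ _ _ _ ((key _ _ _).1 h1).1 ((key _ _ _).1 h2).1 h3
  · intro x hx
    obtain ⟨c', i', j', h1, h2⟩ := h.surj x (by omega)
    have : j' < (p - ee (c, i)) (c', i') := by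
      rw [key]
      refine ⟨h1, ?_⟩
      rintro ⟨h3, h4⟩
      simp only [Prod.mk.injEq] at h3
      obtain ⟨rfl, rfl⟩ := h3
      subst h4
      omega
    exact ⟨c', i', j', this, by rw [kv _ _ _ this, h2]⟩
  · intro c' i' j' hh
    rw [kv _ _ _ hh, kv _ _ _ (by omega)]
    exact h.row _ _ _ ((key _ _ _).1 hh).1
  · intro c' i' j' hh
    have h1 := (key _ _ _).1 hh
    have h2 : j' < (p - ee (c, i)) (c', i') := by
      rw [key]
      refine ⟨lt_of_lt_of_le h1.1 (h.mono _ _), ?_⟩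
      rintro ⟨h3, h4⟩
      simp only [Prod.mk.injEq] at h3
      obtain ⟨rfl, rfl⟩ := h3
      have := h1.1
      omega
    rw [kv _ _ _ hh, kv _ _ _ h2]
    exact h.col _ _ _ h1.1
  · intro c' i' j' hh
    rw [key] at hh
    unfold upd
    split_ifs with h1
    · rfl
    · exact h.outside _ _ _ (fun h2 => hh ⟨h2, h1⟩)

lemma IsT.extend {a b : ℕ} {p : Fin a × ℕ → ℕ} {t : Fin a → ℕ → ℕ → ℕ} {r : Fin a × ℕ}
    (hm : ShMono p) (hr : 0 < p r) (h : IsT b (p - ee r) t) :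
    IsT (b + 1) p (upd t r (p r - 1) b) := by
  obtain ⟨c, i⟩ := r
  obtain ⟨j, hj⟩ : ∃ j, p (c, i) = j + 1 := ⟨p (c, i) - 1, by omega⟩
  rw [show p (c, i) - 1 = j by omega]
  have key : ∀ c' i' j', (j' < (p - ee (c, i)) (c', i')) ↔
      (j' < p (c', i') ∧ ¬ ((c', i') = (c, i) ∧ j' = j)) := by
    intro c' i' j'
    simp only [Pi.sub_apply, ee]
    split_ifs with hx
    · rw [hx, hj]; constructor
      · intro h; exact ⟨by omega, by simp; omega⟩
      · rintro ⟨h1, h2⟩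
        simp at h2; omega
    · simp [hx]
  have kv : ∀ c' i' j', (j' < (p - ee (c, i)) (c', i')) →
      upd t (c, i) j b c' i' j' = t c' i' j' := by
    intro c' i' j' hh
    exact if_neg ((key _ _ _).1 hh).2
  have kb : upd t (c, i) j b c i j = b := if_pos ⟨rfl, rfl⟩
  have cases' : ∀ c' i' j', j' < p (c', i') →
      (j' < (p - ee (c, i)) (c', i')) ∨ (c' = c ∧ i' = i ∧ j' = j) := by
    intro c' i' j' h1
    rw [key]
    by_cases h2 : (c', i') = (c, i) ∧ j' = j
    · right; simp only [Prod.mk.injEq] at h2; tauto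
    · left; exact ⟨h1, h2⟩
  have hcol : p (c, i + 1) ≤ j := by
    have := h.mono c i
    simp [ee] at this
    omega
  refine ⟨hm, ?_, ?_, ?_, ?_, ?_, ?_⟩
  · intro c' i' j' h1
    rcases cases' _ _ _ h1 with h2 | ⟨rfl, rfl, rfl⟩
    · rw [kv _ _ _ h2]; have := h.lt_n _ _ _ h2; omega
    · rw [kb]; omega
  · intro c1 i1 j1 c2 i2 j2 h1 h2 h3
    rcases cases' _ _ _ h1 with h1 | ⟨rfl, rfl, rfl⟩ <;>
    rcases cases' _ _ _ h2 with h2 | ⟨rfl, rfl, rfl⟩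
    · rw [kv _ _ _ h1, kv _ _ _ h2] at h3
      exact h.inj _ _ _ _ _ _ h1 h2 h3
    · rw [kv _ _ _ h1, kb] at h3
      have := h.lt_n _ _ _ h1; omega
    · rw [kv _ _ _ h2, kb] at h3
      have := h.lt_n _ _ _ h2; omega
    · exact ⟨rfl, rfl, rfl⟩
  · intro x hx
    by_cases hxb : x = b
    · exact ⟨c, i, j, by omega, by rw [kb, hxb]⟩
    · obtain ⟨c', i', j', h1, h2⟩ := h.surj x (by omega)
      exact ⟨c', i', j', ((key _ _ _).1 h1).1, by rw [kv _ _ _ h1, h2]⟩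
  · intro c' i' j' h1
    have h0 : j' < (p - ee (c, i)) (c', i') := by
      rw [key]
      refine ⟨by omega, ?_⟩
      rintro ⟨h3, h4⟩
      rw [h3] at h1
      omega
    rw [kv _ _ _ h0]
    rcases cases' _ _ _ h1 with h2 | ⟨rfl, rfl, h2⟩
    · rw [kv _ _ _ h2]; exact h.row _ _ _ h2
    · rw [h2, kb]; exact h.lt_n _ _ _ h0
  · intro c' i' j' h1
    have h0 : j' < (p - ee (c, i)) (c', i') := by
      rw [key]
      refine ⟨lt_of_lt_of_le h1 (hm _ _), ?_⟩
      rintro ⟨h3, h4⟩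
      simp only [Prod.mk.injEq] at h3
      obtain ⟨rfl, rfl⟩ := h3
      omega
    rw [kv _ _ _ h0]
    rcases cases' _ _ _ h1 with h2 | ⟨rfl, h3, rfl⟩
    · rw [kv _ _ _ h2]; exact h.col _ _ _ h2
    · rw [h3, kb]; exact h.lt_n _ _ _ h0
  · intro c' i' j' h1
    have h0 : ¬ ((c', i') = (c, i) ∧ j' = j) := by
      rintro ⟨h3, h4⟩
      rw [h3] at h1
      omega
    rw [upd, if_neg h0]
    exact h.outside _ _ _ (fun h2 => h1 ((key _ _ _).1 h2).1)

/-- The set of tableaux of shape `p`. -/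
def ST {a : ℕ} (b : ℕ) (p : Fin a × ℕ → ℕ) : Set (Fin a → ℕ → ℕ → ℕ) := {t | IsT b p t}

/-- Number of tableaux. -/
def ff {a : ℕ} (b : ℕ) (p : Fin a × ℕ → ℕ) : ℕ := Nat.card (ST b p)

/-- Rows whose last box may be deleted. -/
def posRows {a : ℕ} (N : ℕ) (p : Fin a × ℕ → ℕ) : Finset (Fin a × ℕ) :=
  (rowsN a N).filter (fun r => 0 < p r)

/-- Extension map. -/
def extMap {a : ℕ} (N b : ℕ) (p : Fin a × ℕ → ℕ) (hm : ShMono p) :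
    ((s : {s // s ∈ posRows N p}) × ST b (p - ee s.1)) → ST (b + 1) p :=
  fun x => ⟨upd x.2.1 x.1.1 (p x.1.1 - 1) b,
    IsT.extend hm (Finset.mem_filter.1 x.1.2).2 x.2.2⟩

lemma extMap_bij {a : ℕ} (N b : ℕ) (hN : b + 1 ≤ N) (p : Fin a × ℕ → ℕ) (hm : ShMono p) :
    Function.Bijective (extMap N b p hm) := by
  constructor
  · rintro ⟨⟨s, hs⟩, ⟨t, ht⟩⟩ ⟨⟨s', hs'⟩, ⟨t', ht'⟩⟩ hEq
    have hs0 := (Finset.mem_filter.1 hs).2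
    have hs0' := (Finset.mem_filter.1 hs').2
    have hE : upd t s (p s - 1) b = upd t' s' (p s' - 1) b := congrArg Subtype.val hEq
    have hT := IsT.extend hm hs0 ht
    have e1 : upd t s (p s - 1) b s.1 s.2 (p s - 1) = b := if_pos ⟨rfl, rfl⟩
    have e2 : upd t s (p s - 1) b s'.1 s'.2 (p s' - 1) = b := by rw [hE]; exact if_pos ⟨rfl, rfl⟩
    have h3 := hT.inj s.1 s.2 (p s - 1) s'.1 s'.2 (p s' - 1)
      (show p s - 1 < p s by omega) (show p s' - 1 < p s' by omega) (by rw [e1, e2])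
    have : s = s' := Prod.ext h3.1 h3.2.1
    subst this
    have : t = t' := by
      funext c i j
      have h4 := congrFun (congrFun (congrFun hE c) i) j
      unfold upd at h4
      split_ifs at h4 with h5
      · obtain ⟨h5, rfl⟩ := h5
        subst h5
        rw [ht.outside c i _ (by simp [ee]), ht'.outside c i _ (by simp [ee])]
      · exact h4
    subst this
    rfl
  · rintro ⟨t, ht⟩
    obtain ⟨r, h1, h2, h3⟩ := IsT.restrict ht
    refine ⟨⟨⟨r, ?_⟩, ⟨_, h3⟩⟩, ?_⟩
    · simp only [posRows, rowsN, Finset.mem_filter, Finset.mem_product, Finset.mem_univ,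
        Finset.mem_range, true_and]
      refine ⟨?_, h1⟩
      by_contra hlt
      have := ht.bound r.1 r.2 (by omega)
      simp at this; omega
    · apply Subtype.ext
      funext c i j
      simp only [extMap, upd]
      split_ifs with h5
      · obtain ⟨rfl, rfl⟩ := h5; exact h2.symm
      · rfl

lemma isT_zero {a : ℕ} {p : Fin a × ℕ → ℕ} {t : Fin a → ℕ → ℕ → ℕ} (h : IsT 0 p t) :
    p = 0 ∧ t = 0 := by
  have hp : p = 0 := by funext x; exact h.bound x.1 x.2 (by omega)
  refine ⟨hp, ?_⟩
  funext c i j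
  exact h.outside c i j (by simp [hp])

lemma ST_finite {a : ℕ} (b : ℕ) : ∀ p : Fin a × ℕ → ℕ, Finite (ST b p) := by
  induction b with
  | zero =>
    intro p
    have : Subsingleton (ST 0 p) :=
      ⟨fun x y => Subtype.ext ((isT_zero x.2).2.trans (isT_zero y.2).2.symm)⟩
    infer_instance
  | succ b ih =>
    intro p
    by_cases hm : ShMono p
    · have := ih
      exact Finite.of_surjective _ (extMap_bij (b + 1) b le_rfl p hm).2
    · have : IsEmpty (ST (b + 1) p) := ⟨fun x => hm x.2.mono⟩
      infer_instance

lemma ff_ne {a b : ℕ} {p : Fin a × ℕ → ℕ} (h : ff b p ≠ 0) : ∃ t, IsT b p t := by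
  by_contra hne
  apply h
  have : IsEmpty (ST b p) := ⟨fun x => hne ⟨x.1, x.2⟩⟩
  simp [ff]

lemma ff_rec {a : ℕ} (N b : ℕ) (hN : b + 1 ≤ N) (p : Fin a × ℕ → ℕ) (hm : ShMono p) :
    ff (b + 1) p = ∑ s ∈ posRows N p, ff b (p - ee s) := by
  have := fun q : Fin a × ℕ → ℕ => ST_finite b q
  rw [ff, ← Nat.card_congr (Equiv.ofBijective _ (extMap_bij N b hN p hm)), Nat.card_sigma]
  exact Finset.sum_coe_sort (posRows N p) (fun s => ff b (p - ee s))

lemma ff_zero {a : ℕ} : ff 0 (0 : Fin a × ℕ → ℕ) = 1 := by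
  have hT : IsT 0 (0 : Fin a × ℕ → ℕ) 0 := by
    constructor <;> simp [ShMono]
  rw [ff, Nat.card_eq_one_iff_unique]
  exact ⟨⟨fun x y => Subtype.ext ((isT_zero x.2).2.trans (isT_zero y.2).2.symm)⟩, ⟨⟨0, hT⟩⟩⟩

lemma isT_total {a : ℕ} (b : ℕ) : ∀ (p : Fin a × ℕ → ℕ) (t : Fin a → ℕ → ℕ → ℕ), IsT b p t →
    (∑ c : Fin a, ∑ i ∈ Finset.range b, p (c, i)) = b := by
  induction b with
  | zero => intro p t h; simp
  | succ b ih =>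
    intro p t h
    obtain ⟨r, h1, h2, h3⟩ := h.restrict
    have h4 := ih _ _ h3
    have h5 : ∀ x, p x = (p - ee r) x + ee r x := fun x => by
      conv_lhs => rw [← sub_ee_add h1]
      rfl
    have hr : r.2 < b + 1 := by
      by_contra hlt
      have := h.bound r.1 r.2 (by omega)
      simp at this; omega
    have h6 : (∑ c : Fin a, ∑ i ∈ Finset.range (b + 1), ee r (c, i)) = 1 := by
      obtain ⟨c0, i0⟩ := r
      rw [← Finset.sum_product', Finset.sum_eq_single (c0, i0)]
      · simp [ee]
      · intro x _ hx; simp [ee, hx]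
      · intro hx; exfalso; apply hx; simpa using hr
    have h7 : (∑ c : Fin a, ∑ i ∈ Finset.range (b + 1), (p - ee r) (c, i)) = b := by
      rw [← h4]
      rw [h4] 
      conv_rhs => rw [← h4]
      refine Finset.sum_congr rfl (fun c _ => ?_)
      rw [Finset.sum_range_succ, h3.bound c b le_rfl, add_zero]
    simp_rw [h5, Finset.sum_add_distrib]
    rw [h7, h6]

/-! #### Addable and removable rows -/

lemma mono_add_zero {a : ℕ} {p : Fin a × ℕ → ℕ} (hm : ShMono p) (c : Fin a) :
    ShMono (p + ee (c, 0)) := by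
  intro c' i'
  have := hm c' i'
  simp only [Pi.add_apply, ee, Prod.mk.injEq]
  rw [if_neg (by rintro ⟨-, h3⟩; omega)]
  exact le_trans this (Nat.le_add_right _ _)

lemma mono_add_succ {a : ℕ} {p : Fin a × ℕ → ℕ} (hm : ShMono p) (c : Fin a) (i : ℕ) :
    ShMono (p + ee (c, i + 1)) ↔ p (c, i + 1) < p (c, i) := by
  constructor
  · intro h
    have := h c i
    simp [ee] at this
    omega
  · intro h c' i'
    have := hm c' i'
    by_cases h1 : c' = c ∧ i' = i
    · obtain ⟨rfl, rfl⟩ := h1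
      simp [ee]; omega
    · simp only [Pi.add_apply, ee, Prod.mk.injEq]
      rw [if_neg (by rintro ⟨h2, h3⟩; exact h1 ⟨h2, by omega⟩)]; omega

lemma mono_sub {a : ℕ} {p : Fin a × ℕ → ℕ} (hm : ShMono p) (c : Fin a) (i : ℕ) :
    (0 < p (c, i) ∧ ShMono (p - ee (c, i))) ↔ p (c, i + 1) < p (c, i) := by
  constructor
  · rintro ⟨h0, h⟩
    have := h c i
    simp [ee] at this
    omega
  · intro h
    refine ⟨by omega, ?_⟩
    intro c' i'
    have := hm c' i'
    by_cases h1 : c' = c ∧ i' = i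
    · obtain ⟨rfl, rfl⟩ := h1
      simp [ee]; omega
    · simp only [Pi.sub_apply, ee, Prod.mk.injEq]
      rw [if_neg h1]; omega

/-- Addable rows. -/
def addR {a : ℕ} (N : ℕ) (p : Fin a × ℕ → ℕ) : Finset (Fin a × ℕ) :=
  (rowsN a N).filter (fun r => ShMono (p + ee r))

/-- Removable rows. -/
def remR {a : ℕ} (N : ℕ) (p : Fin a × ℕ → ℕ) : Finset (Fin a × ℕ) :=
  (rowsN a N).filter (fun r => 0 < p r ∧ ShMono (p - ee r))

lemma card_addR {a : ℕ} (N b : ℕ) (hN : b + 1 ≤ N) (p : Fin a × ℕ → ℕ) (hm : ShMono p)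
    (hb : ∀ c i, b ≤ i → p (c, i) = 0) :
    (addR N p).card = (remR N p).card + a := by
  obtain ⟨M, rfl⟩ : ∃ M, N = M + 1 := ⟨N - 1, by omega⟩
  have h1 : (addR (M + 1) p).card =
      ∑ c : Fin a, ((∑ i ∈ Finset.range M, if p (c, i + 1) < p (c, i) then 1 else 0) + 1) := by
    rw [addR, Finset.card_filter, rowsN, Finset.sum_product]
    refine Finset.sum_congr rfl (fun c _ => ?_)
    rw [Finset.sum_range_succ', if_pos (mono_add_zero hm c)]
    simp only [mono_add_succ hm]
  have h2 : (remR (M + 1) p).card =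
      ∑ c : Fin a, (∑ i ∈ Finset.range M, if p (c, i + 1) < p (c, i) then 1 else 0) := by
    rw [remR, Finset.card_filter, rowsN, Finset.sum_product]
    refine Finset.sum_congr rfl (fun c _ => ?_)
    simp only [mono_sub hm]
    rw [Finset.sum_range_succ, hb c M (by omega)]
    simp
  rw [h1, h2, Finset.sum_add_distrib]
  simp

lemma ff_not_mono {a b : ℕ} {p : Fin a × ℕ → ℕ} (h : ¬ ShMono p) : ff b p = 0 := by
  by_contra hne
  obtain ⟨t, ht⟩ := ff_ne hne
  exact h ht.mono

lemma ff_rec_rem {a : ℕ} (N b : ℕ) (hN : b + 1 ≤ N) (p : Fin a × ℕ → ℕ) (hm : ShMono p) :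
    ff (b + 1) p = ∑ s ∈ remR N p, ff b (p - ee s) := by
  rw [ff_rec N b hN p hm]
  symm
  apply Finset.sum_subset
  · intro s; simp only [remR, posRows, Finset.mem_filter]; tauto
  · intro s h1 h2
    apply ff_not_mono
    simp only [remR, posRows, Finset.mem_filter] at h1 h2
    tauto

lemma comm_shape {a : ℕ} {p : Fin a × ℕ → ℕ} {r s : Fin a × ℕ} (hrs : r ≠ s) (hs : 0 < p s) :
    p + ee r - ee s = p - ee s + ee r := by
  funext x
  simp only [Pi.add_apply, Pi.sub_apply, ee]
  split_ifs with h1 h2 h2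
  · exact absurd (h1.symm.trans h2) hrs
  all_goals first | omega | (subst h1; omega) | (subst h2; omega)

lemma mono_sup {a : ℕ} {p : Fin a × ℕ → ℕ} {r s : Fin a × ℕ} (hm : ShMono p)
    (hrs : r ≠ s) (hs : 0 < p s) (h : ShMono (p - ee s + ee r)) :
    ShMono (p + ee r) ∧ ShMono (p - ee s) := by
  have hmax : ∀ x, (p + ee r) x = max (p x) ((p - ee s + ee r) x) := by
    intro x
    simp only [Pi.add_apply, Pi.sub_apply, ee]
    by_cases h1 : x = r
    · have h2 : x ≠ s := fun h => hrs (h1.symm.trans h)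
      simp [h1, hrs]
    · simp [h1]
  have hmin : ∀ x, (p - ee s) x = min (p x) ((p - ee s + ee r) x) := by
    intro x
    simp only [Pi.add_apply, Pi.sub_apply, ee]
    by_cases h1 : x = r
    · simp [h1, hrs]
    · simp [h1]
  constructor
  · intro c i
    rw [hmax, hmax]
    exact max_le_max (hm c i) (h c i)
  · intro c i
    rw [hmin, hmin]
    exact min_le_min (hm c i) (h c i)

/-- Commutation relation of the up and down operators, applied to the counting function. -/
lemma up_sum {a : ℕ} (N b : ℕ) : b ≤ N → ∀ p : Fin a × ℕ → ℕ, ShMono p →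
    ∑ r ∈ rowsN a N, ff b (p + ee r) = a * b * ff (b - 1) p := by
  induction b with
  | zero =>
    intro _ p _
    simp only [mul_zero, zero_mul]
    apply Finset.sum_eq_zero
    intro r _
    by_contra hne
    obtain ⟨t, ht⟩ := ff_ne hne
    have := congrFun (isT_zero ht).1 r
    simp [ee] at this
  | succ b ih =>
    intro hN p hm
    have ih := ih (by omega)
    rw [Nat.add_sub_cancel]
    -- restrict to addable rows
    have e1 : ∑ r ∈ rowsN a N, ff (b + 1) (p + ee r) =
        ∑ r ∈ addR N p, ff (b + 1) (p + ee r) := by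
      symm
      apply Finset.sum_subset (Finset.filter_subset _ _)
      intro r h1 h2
      apply ff_not_mono
      simp only [addR, Finset.mem_filter] at h2
      tauto
    have e2 : ∀ r ∈ addR N p, ff (b + 1) (p + ee r) = ff b p +
        ∑ s ∈ remR N p, if r = s then 0 else ff b (p - ee s + ee r) := by
      intro r hr
      have hr' := Finset.mem_filter.1 hr
      rw [ff_rec N b hN _ hr'.2]
      have hmem : r ∈ posRows N (p + ee r) := by
        simp only [posRows, Finset.mem_filter]
        exact ⟨hr'.1, by simp [ee]⟩
      rw [← Finset.add_sum_erase _ _ hmem, add_ee_sub]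
      congr 1
      have : ∑ s ∈ (posRows N (p + ee r)).erase r, ff b (p + ee r - ee s) =
          ∑ s ∈ posRows N p, if r = s then 0 else ff b (p - ee s + ee r) := by
        rw [← Finset.sum_filter_ne_zero (s := posRows N p)]
        rw [← Finset.sum_filter_ne_zero (s := (posRows N (p + ee r)).erase r)]
        have hpos : ∀ s, r ≠ s → (0 < (p + ee r) s ↔ 0 < p s) := by
          intro s hs; simp [ee, hs.symm]
        apply Finset.sum_congr
        · ext s
          simp only [Finset.mem_filter, Finset.mem_erase, posRows]
          by_cases hs : r = s
          · simp [hs]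
          · rw [hpos s hs, if_neg hs]
            constructor
            · rintro ⟨⟨_, h1, h2⟩, h3⟩
              rw [comm_shape hs h2] at h3
              exact ⟨⟨h1, h2⟩, h3⟩
            · rintro ⟨⟨h1, h2⟩, h3⟩
              rw [comm_shape hs h2]
              exact ⟨⟨Ne.symm hs, h1, h2⟩, h3⟩
        · intro s hs
          simp only [Finset.mem_filter, posRows] at hs
          by_cases hrs : r = s
          · simp [hrs] at hs
          · rw [if_neg hrs, comm_shape hrs hs.1.2]
      rw [this]
      symm
      apply Finset.sum_subset
      · intro s; simp only [remR, posRows, Finset.mem_filter]; tauto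
      · intro s h1 h2
        simp only [remR, posRows, Finset.mem_filter] at h1 h2
        split_ifs with h3
        · rfl
        · apply ff_not_mono
          intro h4
          have := mono_sup hm h3 h1.2 h4
          tauto
    have e3 : ∀ s ∈ remR N p,
        (∑ r ∈ addR N p, if r = s then 0 else ff b (p - ee s + ee r)) + ff b p =
          a * b * ff (b - 1) (p - ee s) := by
      intro s hs
      have hs' := Finset.mem_filter.1 hs
      rw [← ih _ hs'.2.2, ← Finset.add_sum_erase _ _ hs'.1, sub_ee_add hs'.2.1, add_comm]
      congr 1
      have : ∑ r ∈ (rowsN a N).erase s, ff b (p - ee s + ee r) =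
          ∑ r ∈ rowsN a N, if r = s then 0 else ff b (p - ee s + ee r) := by
        rw [← Finset.add_sum_erase (rowsN a N) _ hs'.1, if_pos rfl, zero_add]
        apply Finset.sum_congr rfl
        intro r hr
        rw [if_neg (Finset.ne_of_mem_erase hr)]
      rw [this]
      apply Finset.sum_subset (Finset.filter_subset _ _)
      intro r h1 h2
      simp only [addR, Finset.mem_filter] at h2
      split_ifs with h3
      · rfl
      · apply ff_not_mono
        intro h4
        have := mono_sup hm h3 hs'.2.1 h4
        tauto
    have e4 : ∑ r ∈ addR N p, ff (b + 1) (p + ee r) + (remR N p).card * ff b p =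
        (addR N p).card * ff b p + a * b * ff b p := by
      rw [Finset.sum_congr rfl e2, Finset.sum_add_distrib, Finset.sum_comm, Finset.sum_const,
        smul_eq_mul, add_assoc]
      congr 1
      rw [← smul_eq_mul, ← Finset.sum_const, ← Finset.sum_add_distrib, Finset.sum_congr rfl e3,
        ← Finset.mul_sum]
      cases b with
      | zero => simp
      | succ b => rw [ff_rec_rem N b (by omega) p hm, Nat.add_sub_cancel]
    rw [e1]
    by_cases h0 : ff b p = 0
    · rw [h0] at e4 ⊢
      simpa using e4
    · obtain ⟨t, ht⟩ := ff_ne h0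
      rw [card_addR N b hN p hm ht.bound] at e4
      have : a * (b + 1) * ff b p = a * b * ff b p + a * ff b p := by ring
      rw [this]
      rw [add_mul] at e4
      omega

/-- A finite set containing all shapes of size `b`. -/
def shapes (a N : ℕ) : ℕ → Finset (Fin a × ℕ → ℕ)
  | 0 => {0}
  | b + 1 => (rowsN a N ×ˢ shapes a N b).image (fun x => x.2 + ee x.1)

lemma mem_shapes {a : ℕ} (N b : ℕ) : b ≤ N → ∀ (p : Fin a × ℕ → ℕ) (t : Fin a → ℕ → ℕ → ℕ),
    IsT b p t → p ∈ shapes a N b := by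
  induction b with
  | zero => intro _ p t h; simp [shapes, (isT_zero h).1]
  | succ b ih =>
    intro hN p t h
    obtain ⟨r, h1, h2, h3⟩ := h.restrict
    have h4 := ih (by omega) _ _ h3
    simp only [shapes, Finset.mem_image, Finset.mem_product]
    refine ⟨(r, p - ee r), ⟨?_, h4⟩, sub_ee_add h1⟩
    simp only [rowsN, Finset.mem_product, Finset.mem_univ, Finset.mem_range, true_and]
    by_contra hlt
    have := h.bound r.1 r.2 (by omega)
    simp at this; omega

lemma sum_sq {a : ℕ} (N b : ℕ) : b ≤ N →
    ∑ p ∈ shapes a N b, ff b p * ff b p = a ^ b * b.factorial := by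
  induction b with
  | zero => intro _; simp [shapes, ff_zero]
  | succ b ih =>
    intro hN
    have ih := ih (by omega)
    have e1 : ∀ q ∈ shapes a N (b + 1), ff (b + 1) q * ff (b + 1) q =
        ∑ s ∈ rowsN a N, if 0 < q s then ff (b + 1) q * ff b (q - ee s) else 0 := by
      intro q _
      by_cases hm : ShMono q
      · conv_lhs => rw [ff_rec N b hN q hm]
        rw [← ff_rec N b hN q hm, ← Finset.sum_filter, ← Finset.mul_sum]
        conv_lhs => rw [ff_rec N b hN q hm]
        rw [ff_rec N b hN q hm]
        rfl
      · simp [ff_not_mono hm]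
    have e2 : ∀ s ∈ rowsN a N,
        (∑ q ∈ shapes a N (b + 1), if 0 < q s then ff (b + 1) q * ff b (q - ee s) else 0) =
        ∑ p ∈ shapes a N b, ff b p * ff (b + 1) (p + ee s) := by
      intro s hs
      symm
      apply Finset.sum_of_injOn (fun p => p + ee s)
      · intro p _ p' _ h
        exact add_right_cancel h
      · intro p hp
        simp only [shapes, Finset.coe_image, Set.mem_image]
        exact ⟨(s, p), by simpa using ⟨hs, hp⟩, rfl⟩
      · intro q _ hq
        split_ifs with h0
        · by_contra hne
          obtain ⟨t, ht⟩ := ff_ne (right_ne_zero_of_mul hne)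
          exact hq ⟨q - ee s, mem_shapes N b (by omega) _ _ ht, sub_ee_add h0⟩
        · rfl
      · intro p _
        rw [if_pos (by simp [ee]), add_ee_sub, mul_comm]
    rw [Finset.sum_congr rfl e1, Finset.sum_comm, Finset.sum_congr rfl e2, Finset.sum_comm]
    have e3 : ∀ p ∈ shapes a N b, ∑ s ∈ rowsN a N, ff b p * ff (b + 1) (p + ee s) =
        a * (b + 1) * (ff b p * ff b p) := by
      intro p _
      by_cases hm : ShMono p
      · rw [← Finset.mul_sum, up_sum N (b + 1) hN p hm, Nat.add_sub_cancel]
        ring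
      · simp [ff_not_mono hm]
    rw [Finset.sum_congr rfl e3, ← Finset.mul_sum, ih, Nat.factorial_succ]
    ring

lemma StdTableau.isT {a b : ℕ} {Λ : Multipartition a b} (T : StdTableau Λ) :
    IsT b (fun x : Fin a × ℕ => Λ.part x.1 x.2) T.entry where
  mono := Λ.mono
  lt_n := T.lt_n
  inj := fun c i j c' i' j' h h' h2 => by
    have := T.inj c i j c' i' j' h h' h2
    simpa using this
  surj := T.surj
  row := T.row
  col := T.col
  outside := T.outside

/-- Pairs of tableaux, as plain data. -/
def toData (a b : ℕ) : ((Λ : Multipartition a b) × (StdTableau Λ × StdTableau Λ)) →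
    ((p : {p // p ∈ shapes a b b}) × (ST b p.1 × ST b p.1)) :=
  fun x => ⟨⟨fun y => x.1.part y.1 y.2, mem_shapes b b le_rfl _ _ x.2.1.isT⟩,
    ⟨x.2.1.entry, x.2.1.isT⟩, ⟨x.2.2.entry, x.2.2.isT⟩⟩

/-- A plain tableau as a standard tableau. -/
def IsT.toStd {a b : ℕ} {Λ : Multipartition a b} {t : Fin a → ℕ → ℕ → ℕ}
    (h : IsT b (fun x : Fin a × ℕ => Λ.part x.1 x.2) t) : StdTableau Λ where
  entry := t
  lt_n := h.lt_n
  inj := fun c i j c' i' j' h1 h2 h3 => by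
    obtain ⟨rfl, rfl, rfl⟩ := h.inj c i j c' i' j' h1 h2 h3
    rfl
  surj := h.surj
  row := h.row
  col := h.col
  outside := h.outside

lemma toData_bij (a b : ℕ) : Function.Bijective (toData a b) := by
  constructor
  · rintro ⟨⟨p, h1, h2, h3⟩, ⟨s, _, _, _, _, _, _⟩, ⟨t, _, _, _, _, _, _⟩⟩
      ⟨⟨p', h1', h2', h3'⟩, ⟨s', _, _, _, _, _, _⟩, ⟨t', _, _, _, _, _, _⟩⟩ h
    have hp : p = p' := by
      have h5 := congrArg (fun x => x.1.1) h
      funext c i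
      exact congrFun h5 (c, i)
    have hs : s = s' := congrArg (fun x => x.2.1.1) h
    have ht : t = t' := congrArg (fun x => x.2.2.1) h
    subst hp hs ht
    rfl
  · rintro ⟨⟨p, hp⟩, ⟨s, hs⟩, ⟨t, ht⟩⟩
    have hs : IsT b p s := hs
    have ht : IsT b p t := ht
    let Λ : Multipartition a b :=
      ⟨fun c i => p (c, i), hs.mono, hs.bound, isT_total b p s hs⟩
    exact ⟨⟨Λ, IsT.toStd (Λ := Λ) hs, IsT.toStd (Λ := Λ) ht⟩, rfl⟩

lemma main_count (a b : ℕ) :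
    Nat.card ((Λ : Multipartition a b) × (StdTableau Λ × StdTableau Λ)) =
      a ^ b * b.factorial := by
  have := fun q : Fin a × ℕ → ℕ => ST_finite b q
  rw [Nat.card_congr (Equiv.ofBijective _ (toData_bij a b)), Nat.card_sigma, ← sum_sq b b le_rfl,
    ← Finset.sum_coe_sort (shapes a b b)]
  refine Finset.sum_congr rfl (fun p _ => ?_)
  rw [Nat.card_prod]
  rfl

/-- For all `m ≥ 1` and `n ≥ 1`, the sum over all `m`-multipartitions `Λ`
of `n` of the square of the number of standard tableaux of shape `Λ` equals `m^n · n!`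
(stated as the cardinality of the type of triples `(Λ, s, t)` with `s, t` standard tableaux
of shape `Λ`). -/
theorem sum_sq_card_stdTableau (hm : 1 ≤ m) (hn : 1 ≤ n) :
    Nat.card ((Λ : Multipartition m n) × (StdTableau Λ × StdTableau Λ)) =
      m ^ n * n.factorial := by
  exact main_count m n

end Cyclo
end
end

section
/- Let ζ ∈ k be a primitive m-th root of unity. Then the cyclotomic Hecke algebra H_n(1, ζ, ζ^2, …, ζ^{m−1}; 1), i.e. the algebra with parameters q = 1 and v_i = ζ^{i−1} for 1 ≤ i ≤ m, is isomorphic as a k-algebra to the group algebra k[G(m,1,n)], where G(m,1,n) is the semidirect product (ℤ/mℤ)^n ⋊ S_n with the symmetric group S_n acting by permuting the n coordinates. -/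
noncomputable section
open scoped Classical
open scoped Fin.NatCast

namespace Cyclo

variable (k : Type) [Field k] (m n : ℕ) (v : Fin m → k) (q : k)

variable (k : Type) [Field k] (m n : ℕ)

variable (k : Type) [Field k] (m n : ℕ) (v : Fin m → k) (q : k)

open Multipartition

/-- The action of `S_n` on `(ℤ/mℤ)^n` (written multiplicatively) by permuting the `n`
coordinates. -/
def permHom (m n : ℕ) : Equiv.Perm (Fin n) →* MulAut (Fin n → Multiplicative (ZMod m)) where
  toFun σ :=
    { toEquiv := Equiv.piCongrLeft' (fun _ => Multiplicative (ZMod m)) σ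
      map_mul' := fun f g => rfl }
  map_one' := by ext f i; rfl
  map_mul' := fun σ τ => by ext f i; rfl

/-- The complex reflection group `G(m,1,n) = (ℤ/mℤ)^n ⋊ S_n`. -/
def Gm1n (m n : ℕ) : Type :=
  SemidirectProduct (Fin n → Multiplicative (ZMod m)) (Equiv.Perm (Fin n)) (permHom m n)

instance (m n : ℕ) : Group (Gm1n m n) :=
  inferInstanceAs (Group (SemidirectProduct _ _ (permHom m n)))

section MonoidCount

variable {M : Type} [Monoid M]

/-- The relations of `G(m,1,n)`, for a sequence of elements of a monoid. -/
structure GRel (a : ℕ → M) (n m : ℕ) : Prop where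
  h0 : a 0 ^ m = 1
  hq : ∀ i, 1 ≤ i → i < n → a i * a i = 1
  hb0 : 1 < n → a 0 * a 1 * a 0 * a 1 = a 1 * a 0 * a 1 * a 0
  hc : ∀ i j, i + 2 ≤ j → j < n → a i * a j = a j * a i
  hb : ∀ i, 1 ≤ i → i + 1 < n → a (i + 1) * a i * a (i + 1) = a i * a (i + 1) * a i

/-- `a_t ⋯ a_1`. -/
def dn (a : ℕ → M) : ℕ → M
  | 0 => 1
  | t + 1 => a (t + 1) * dn a t

/-- `a_1 ⋯ a_j`. -/
def up (a : ℕ → M) : ℕ → M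
  | 0 => 1
  | j + 1 => up a j * a (j + 1)

/-- Coset representatives. -/
def cos (a : ℕ → M) (t : ℕ) (p : ℕ × ℕ) : M := dn a t * a 0 ^ p.2 * up a p.1

variable {a : ℕ → M} {n m : ℕ}

theorem GRel.dn_far (h : GRel a n m) (t i : ℕ) (hi : t + 2 ≤ i) (hn : i < n) :
    dn a t * a i = a i * dn a t := by
  induction t with
  | zero => simp [dn]
  | succ t ih =>
    rw [dn, mul_assoc, ih (by omega), ← mul_assoc, h.hc (t + 1) i (by omega) hn, mul_assoc]

theorem GRel.up_far (h : GRel a n m) (t i : ℕ) (hi : t + 2 ≤ i) (hn : i < n) :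
    up a t * a i = a i * up a t := by
  induction t with
  | zero => simp [up]
  | succ t ih =>
    rw [up, mul_assoc, h.hc (t + 1) i (by omega) hn, ← mul_assoc, ih (by omega), mul_assoc]

theorem GRel.dn_shift (h : GRel a n m) (t i : ℕ) (hi : 1 ≤ i) (hit : i + 1 ≤ t) (hn : t < n) :
    dn a t * a (i + 1) = a i * dn a t := by
  induction t with
  | zero => omega
  | succ t ih =>
    by_cases hh : i + 1 ≤ t
    · rw [dn, mul_assoc, ih hh (by omega), ← mul_assoc, ← h.hc i (t + 1) (by omega) hn, mul_assoc]
    · obtain rfl : t = i := by omega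
      obtain ⟨s, rfl⟩ : ∃ s, t = s + 1 := ⟨t - 1, by omega⟩
      have h1 := h.hb (s + 1) (by omega) hn
      simp only [dn]
      rw [mul_assoc, mul_assoc, h.dn_far s (s + 1 + 1) (by omega) hn]
      simp only [← mul_assoc]
      rw [h1]

theorem GRel.up_shift (h : GRel a n m) (t i : ℕ) (hi : 1 ≤ i) (hit : i < t) (hn : t < n) :
    up a t * a i = a (i + 1) * up a t := by
  induction t with
  | zero => omega
  | succ t ih =>
    by_cases hh : i < t
    · rw [up, mul_assoc, ← h.hc i (t + 1) (by omega) hn, ← mul_assoc, ih hh (by omega), mul_assoc]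
    · obtain rfl : t = i := by omega
      obtain ⟨s, rfl⟩ : ∃ s, t = s + 1 := ⟨t - 1, by omega⟩
      have h1 := h.hb (s + 1) (by omega) hn
      simp only [up]
      rw [← mul_assoc (a (s + 1 + 1)), ← mul_assoc (a (s + 1 + 1)),
        ← h.up_far s (s + 1 + 1) (by omega) hn]
      simp only [mul_assoc] at h1 ⊢
      rw [h1]

theorem GRel.pow_far (h : GRel a n m) (e i : ℕ) (hi : 2 ≤ i) (hn : i < n) :
    a 0 ^ e * a i = a i * a 0 ^ e :=
  (Commute.pow_left (show Commute (a 0) (a i) from h.hc 0 i (by omega) hn) e).eq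

theorem GRel.braid_pow (h : GRel a n m) (hn : 1 < n) (e : ℕ) :
    Commute (a 0) (a 1 * a 0 ^ e * a 1) := by
  induction e with
  | zero => simp [h.hq 1 le_rfl hn]
  | succ e ih =>
    have h1 : a 1 * a 0 ^ (e + 1) * a 1 = (a 1 * a 0 ^ e * a 1) * (a 1 * a 0 * a 1) := by
      have := h.hq 1 le_rfl hn
      rw [pow_succ]
      calc a 1 * (a 0 ^ e * a 0) * a 1 = a 1 * a 0 ^ e * 1 * a 0 * a 1 := by
            simp only [mul_assoc, one_mul]
        _ = _ := by rw [← this]; simp only [mul_assoc]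
    rw [h1]
    refine ih.mul_right ?_
    have := h.hb0 hn
    simp only [Commute, SemiconjBy, mul_assoc] at this ⊢
    exact this

theorem GRel.cos_zero1 (h : GRel a n m) (t e : ℕ) (hn : t + 1 < n) :
    dn a (t + 1) * a 0 ^ e * a 1 * a 0 = a 0 * (dn a (t + 1) * a 0 ^ e * a 1) := by
  induction t with
  | zero =>
    simpa [dn] using (h.braid_pow hn e).eq.symm
  | succ t ih =>
    have := ih (by omega)
    rw [dn]
    simp only [mul_assoc] at this ⊢
    rw [this, ← mul_assoc, ← h.hc 0 (t + 1 + 1) (by omega) hn, mul_assoc]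

theorem GRel.cos_zero (h : GRel a n m) (t j e : ℕ) (hn : t + 1 < n) (hj : j ≤ t) :
    cos a (t + 1) (j + 1, e) * a 0 = a 0 * cos a (t + 1) (j + 1, e) := by
  simp only [cos]
  induction j with
  | zero => simpa [up] using h.cos_zero1 t e hn
  | succ j ih =>
    have := ih (by omega)
    rw [up, ← mul_assoc, mul_assoc _ _ (a 0), ← h.hc 0 (j + 1 + 1) (by omega) (by omega),
      ← mul_assoc, this, mul_assoc]

/-- Right multiplication of a coset representative by a generator. -/
theorem GRel.cos_mul (h : GRel a n m) (hm : 0 < m) (t i : ℕ) (hn : t < n) (hi : i ≤ t) (p : ℕ × ℕ)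
    (hp1 : p.1 ≤ t) (hp2 : p.2 < m) :
    (∃ p' : ℕ × ℕ, p'.1 ≤ t ∧ p'.2 < m ∧ cos a t p * a i = cos a t p') ∨
      ∃ i' < t, cos a t p * a i = a i' * cos a t p := by
  obtain ⟨j, e⟩ := p
  simp only at hp1 hp2
  rcases Nat.eq_zero_or_pos i with rfl | hi0
  · rcases Nat.eq_zero_or_pos j with rfl | hj
    · left
      by_cases he : e + 1 = m
      · refine ⟨(0, 0), by simp, hm, ?_⟩
        simp only [cos, up, mul_one, pow_zero]
        rw [mul_assoc, ← pow_succ, he, h.h0, mul_one]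
      · refine ⟨(0, e + 1), by simp, by simp only; omega, ?_⟩
        simp only [cos, up, mul_one]
        rw [mul_assoc, ← pow_succ]
    · right
      obtain ⟨s, rfl⟩ : ∃ s, t = s + 1 := ⟨t - 1, by omega⟩
      obtain ⟨r, rfl⟩ : ∃ r, j = r + 1 := ⟨j - 1, by omega⟩
      exact ⟨0, by omega, h.cos_zero s r e hn (by omega)⟩
  · obtain ⟨r, rfl⟩ : ∃ r, i = r + 1 := ⟨i - 1, by omega⟩
    rcases lt_trichotomy (r + 1) j with hij | rfl | hij
    · right
      refine ⟨r + 1, by omega, ?_⟩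
      simp only [cos]
      rw [mul_assoc, h.up_shift j (r + 1) (by omega) hij (by omega), ← mul_assoc,
        mul_assoc (dn a t), h.pow_far e (r + 1 + 1) (by omega) (by omega), ← mul_assoc,
        h.dn_shift t (r + 1) (by omega) (by omega) hn]
      simp only [mul_assoc]
    · left
      refine ⟨(r, e), by simp only; omega, hp2, ?_⟩
      simp only [cos, up]
      rw [mul_assoc, mul_assoc (up a r), h.hq (r + 1) (by omega) (by omega), mul_one]
    · rcases Nat.lt_or_ge j r with hjr | hjr
      · right
        refine ⟨r, by omega, ?_⟩
        simp only [cos]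
        rw [mul_assoc, h.up_far j (r + 1) (by omega) (by omega), ← mul_assoc,
          mul_assoc (dn a t), h.pow_far e (r + 1) (by omega) (by omega), ← mul_assoc,
          h.dn_shift t r (by omega) (by omega) hn]
        simp only [mul_assoc]
      · left
        obtain rfl : j = r := by omega
        refine ⟨(j + 1, e), hi, hp2, ?_⟩
        simp only [cos, up, mul_assoc]

/-- The normal forms. -/
def nf (a : ℕ → M) (m : ℕ) : ℕ → Finset M
  | 0 => {1}
  | t + 1 => Finset.image₂ (fun x p => x * cos a t p) (nf a m t)
      (Finset.range (t + 1) ×ˢ Finset.range m)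

theorem card_nf (a : ℕ → M) (m t : ℕ) : (nf a m t).card ≤ m ^ t * t.factorial := by
  induction t with
  | zero => simp [nf]
  | succ t ih =>
    refine (Finset.card_image₂_le _ _ _).trans ?_
    rw [Finset.card_product, Finset.card_range, Finset.card_range]
    calc _ ≤ m ^ t * t.factorial * ((t + 1) * m) := Nat.mul_le_mul_right _ ih
      _ = _ := by rw [pow_succ, Nat.factorial_succ]; ring

theorem GRel.one_mem_nf (h : GRel a n m) (hm : 0 < m) (t : ℕ) (ht : t ≤ n) : 1 ∈ nf a m t := by
  have key : ∀ t, t < n → dn a t * up a t = 1 := by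
    intro t
    induction t with
    | zero => simp [dn, up]
    | succ t ih =>
      intro ht
      rw [dn, up, mul_assoc, ← mul_assoc (dn a t), ih (by omega), one_mul,
        h.hq (t + 1) (by omega) ht]
  induction t with
  | zero => simp [nf]
  | succ t ih =>
    refine Finset.mem_image₂.2 ⟨1, ih (by omega), (t, 0), by simp [hm], ?_⟩
    simp [cos, key t (by omega)]

theorem GRel.nf_mul (h : GRel a n m) (hm : 0 < m) (t : ℕ) (ht : t ≤ n) (x : M) (hx : x ∈ nf a m t)
    (i : ℕ) (hi : i < t) : x * a i ∈ nf a m t := by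
  induction t generalizing x i with
  | zero => omega
  | succ t ih =>
    obtain ⟨y, hy, p, hp, rfl⟩ := Finset.mem_image₂.1 hx
    simp only [Finset.mem_product, Finset.mem_range] at hp
    rcases h.cos_mul hm t i (by omega) (by omega) p (by omega) hp.2 with
      ⟨p', h1, h2, h3⟩ | ⟨i', h1, h2⟩
    · refine Finset.mem_image₂.2 ⟨y, hy, p', ?_, ?_⟩
      · simp only [Finset.mem_product, Finset.mem_range]; omega
      · rw [mul_assoc, h3]
    · refine Finset.mem_image₂.2 ⟨y * a i', ih (by omega) y hy i' h1, p, ?_, ?_⟩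
      · simp only [Finset.mem_product, Finset.mem_range]; omega
      · rw [mul_assoc, mul_assoc, h2]

end MonoidCount

section Final

theorem prod_sub_zeta {k A : Type} [Field k] [Ring A] [Algebra k A] {m : ℕ} (hm : 0 < m) {ζ : k}
    (hζ : IsPrimitiveRoot ζ m) (x : A) :
    (List.ofFn fun j : Fin m => (x - algebraMap k A (ζ ^ (j : ℕ)))).prod = x ^ m - 1 := by
  have h1 := X_pow_sub_C_eq_prod hζ (α := 1) (a := 1) hm (by simp)
  have h2 := congrArg (Polynomial.aeval x) h1
  rw [Finset.prod_range, ← List.prod_ofFn, map_list_prod, List.map_ofFn] at h2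
  simp only [map_sub, map_pow, Polynomial.aeval_X, map_one] at h2
  rw [h2]
  congr 2
  funext j
  simp

variable {k : Type} [Field k] {m n : ℕ} {ζ : k}

/-- The quotient map. -/
def proj (k : Type) [Field k] (m n : ℕ) (v : Fin m → k) (q : k) :
    FreeAlgebra k (Fin n) →ₐ[k] CH k m n v q :=
  RingQuot.mkAlgHom k (Rel k m n v q)

/-- The generators, extended by `1`. -/
def genx (k : Type) [Field k] (m n : ℕ) (v : Fin m → k) (q : k) (i : ℕ) : CH k m n v q :=
  if h : i < n then proj k m n v q (FreeAlgebra.ι k ⟨i, h⟩) else 1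

theorem proj_rel {v : Fin m → k} {q : k} {x y : FreeAlgebra k (Fin n)} (h : Rel k m n v q x y) :
    proj k m n v q x = proj k m n v q y :=
  RingQuot.mkAlgHom_rel k h

theorem proj_surj (v : Fin m → k) (q : k) : Function.Surjective (proj k m n v q) :=
  RingQuot.mkAlgHom_surjective k _

theorem genx_rel (hm : 0 < m) (hn : 0 < n) (hζ : IsPrimitiveRoot ζ m) :
    GRel (genx k m n (fun j : Fin m => ζ ^ (j : ℕ)) 1) n m where
  h0 := by
    have h := proj_rel (Rel.cyclo (k := k) (m := m) (v := fun j : Fin m => ζ ^ (j : ℕ)) (q := 1)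
      (⟨0, hn⟩ : Fin n) rfl)
    rw [prod_sub_zeta hm hζ, map_sub, map_pow, map_one, map_zero, sub_eq_zero] at h
    simpa [genx, hn] using h
  hq i hi hin := by
    have h := proj_rel (Rel.quad (k := k) (m := m) (v := fun j : Fin m => ζ ^ (j : ℕ)) (q := 1)
      (⟨i, hin⟩ : Fin n) hi)
    simp only [map_mul, map_sub, map_add, map_one, map_zero] at h
    simp only [genx, hin, dif_pos]
    rw [← sub_eq_zero, ← h]
    noncomm_ring
  hb0 h1 := by
    have h := proj_rel (Rel.braid0 (k := k) (m := m) (v := fun j : Fin m => ζ ^ (j : ℕ)) (q := 1)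
      (⟨0, hn⟩ : Fin n) ⟨1, h1⟩ rfl rfl)
    simpa only [map_mul, genx, hn, h1, dif_pos] using h
  hc i j hij hj := by
    have hi : i < n := by omega
    have h := proj_rel (Rel.comm (k := k) (m := m) (v := fun j : Fin m => ζ ^ (j : ℕ)) (q := 1)
      (⟨i, hi⟩ : Fin n) ⟨j, hj⟩ hij)
    simpa only [map_mul, genx, hi, hj, dif_pos] using h
  hb i hi h1 := by
    have hi' : i < n := by omega
    have h := proj_rel (Rel.braid (k := k) (m := m) (v := fun j : Fin m => ζ ^ (j : ℕ)) (q := 1)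
      (⟨i, hi'⟩ : Fin n) ⟨i + 1, h1⟩ hi rfl)
    simpa only [map_mul, genx, hi', h1, dif_pos] using h

theorem span_nf (hm : 0 < m) (hn : 0 < n) (hζ : IsPrimitiveRoot ζ m) :
    Submodule.span k
      (nf (genx k m n (fun j : Fin m => ζ ^ (j : ℕ)) 1) m n   :
        Set (CH k m n (fun j : Fin m => ζ ^ (j : ℕ)) 1)) = ⊤ := by
  have hr := genx_rel (k := k) hm hn hζ
  set v : Fin m → k := fun j : Fin m => ζ ^ (j : ℕ)
  set S := Submodule.span k (nf (genx k m n v 1) m n : Set (CH k m n v 1))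
  have key : ∀ f : FreeAlgebra k (Fin n), ∀ y ∈ S, y * proj k m n v 1 f ∈ S := by
    intro f
    induction f using FreeAlgebra.induction with
    | grade0 r =>
      intro y hy
      rw [AlgHom.commutes, ← Algebra.commutes, ← Algebra.smul_def]
      exact S.smul_mem r hy
    | grade1 i =>
      intro y hy
      induction hy using Submodule.span_induction with
      | mem x hx =>
        have := hr.nf_mul hm n le_rfl x hx i i.2
        rw [genx, dif_pos i.2] at this
        exact Submodule.subset_span this
      | zero => rw [zero_mul]; exact S.zero_mem
      | add x y _ _ hx hy => rw [add_mul]; exact S.add_mem hx hy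
      | smul r x _ hx => rw [smul_mul_assoc]; exact S.smul_mem r hx
    | mul a b ha hb =>
      intro y hy
      rw [map_mul, ← mul_assoc]
      exact hb _ (ha y hy)
    | add a b ha hb =>
      intro y hy
      rw [map_add, mul_add]
      exact S.add_mem (ha y hy) (hb y hy)
  rw [eq_top_iff]
  intro x _
  obtain ⟨f, rfl⟩ := proj_surj v 1 x
  have := key f 1 (Submodule.subset_span (hr.one_mem_nf hm n le_rfl))
  rwa [one_mul] at this

/-- `G(m,1,n)` as a semidirect product. -/
abbrev GG (m n : ℕ) : Type :=
  SemidirectProduct (Fin n → Multiplicative (ZMod m)) (Equiv.Perm (Fin n)) (permHom m n)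

theorem permHom_apply (m n : ℕ) (σ : Equiv.Perm (Fin n)) (f : Fin n → Multiplicative (ZMod m))
    (i : Fin n) : permHom m n σ f i = f (σ.symm i) := rfl

theorem permHom_single (m n : ℕ) (σ : Equiv.Perm (Fin n)) (i : Fin n)
    (x : Multiplicative (ZMod m)) :
    permHom m n σ (Pi.mulSingle i x) = Pi.mulSingle (σ i) x := by
  ext j
  rw [permHom_apply]
  by_cases h : j = σ i
  · subst h; simp
  · have h' : σ.symm j ≠ i := by
      rintro rfl; simp at h
    simp [Pi.mulSingle_eq_of_ne h, Pi.mulSingle_eq_of_ne h']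

/-- The first generator. -/
def tt (m n : ℕ) : Fin (n + 1) → Multiplicative (ZMod m) :=
  Pi.mulSingle 0 (Multiplicative.ofAdd 1)

/-- The generators of `G(m,1,n+1)`. -/
def gg (m n : ℕ) : Fin (n + 1) → GG m (n + 1) :=
  Fin.cases (SemidirectProduct.inl (tt m n))
    (fun i : Fin n => SemidirectProduct.inr (Equiv.swap i.castSucc i.succ))

theorem gg_zero (m n : ℕ) (i : Fin (n + 1)) (hi : i.1 = 0) :
    gg m n i = SemidirectProduct.inl (tt m n) := by
  obtain rfl : i = 0 := Fin.ext hi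
  rfl

theorem gg_pos (m n : ℕ) (i : Fin (n + 1)) (hi : 1 ≤ i.1) :
    gg m n i = SemidirectProduct.inr (Equiv.swap ⟨i.1 - 1, by omega⟩ i) := by
  obtain ⟨j, rfl⟩ := Fin.exists_succ_eq.2 (show i ≠ 0 by rintro rfl; simp at hi)
  rfl

theorem tt_pow (m n : ℕ) : tt m n ^ m = 1 := by
  rw [tt, ← Pi.mulSingle_pow, ← ofAdd_nsmul]
  simp

theorem gg_quad (m n : ℕ) (i : Fin (n + 1)) (hi : 1 ≤ i.1) : gg m n i * gg m n i = 1 := by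
  rw [gg_pos m n i hi, ← map_mul, Equiv.swap_mul_self, map_one]

theorem gg_braid0 (m n : ℕ) (i j : Fin (n + 1)) (hi : i.1 = 0) (hj : j.1 = 1) :
    gg m n i * gg m n j * gg m n i * gg m n j = gg m n j * gg m n i * gg m n j * gg m n i := by
  rw [gg_zero m n i hi, gg_pos m n j hj.ge]
  apply SemidirectProduct.ext
  · simp [mul_comm]
  · simp

theorem gg_comm (m n : ℕ) (i j : Fin (n + 1)) (h : i.1 + 2 ≤ j.1) :
    gg m n i * gg m n j = gg m n j * gg m n i := by
  rw [gg_pos m n j (by omega)]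
  rcases Nat.eq_zero_or_pos i.1 with hi | hi
  · rw [gg_zero m n i hi]
    apply SemidirectProduct.ext
    · have : permHom m (n + 1) (Equiv.swap ⟨j.1 - 1, by omega⟩ j) (tt m n) = tt m n := by
        rw [tt, permHom_single, Equiv.swap_apply_of_ne_of_ne]
        · intro h'
          have := congrArg Fin.val h'
          simp at this; omega
        · rintro rfl; simp at h
      simp [this]
    · simp
  · rw [gg_pos m n i hi, ← map_mul, ← map_mul]
    congr 1
    apply Equiv.Perm.Disjoint.commute
    rw [Equiv.Perm.disjoint_iff_eq_or_eq]
    intro x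
    by_cases hx : x.1 = i.1 ∨ x.1 = i.1 - 1
    · right
      apply Equiv.swap_apply_of_ne_of_ne <;>
      · intro h'
        have := congrArg Fin.val h'
        try simp only at this
        omega
    · left
      apply Equiv.swap_apply_of_ne_of_ne <;>
      · intro h'
        have := congrArg Fin.val h'
        try simp only at this
        omega

theorem swap_braid {α : Type} [DecidableEq α] (a b c : α) (hab : a ≠ b) (hbc : b ≠ c) (hac : a ≠ c) :
    Equiv.swap b c * Equiv.swap a b * Equiv.swap b c =
      Equiv.swap a b * Equiv.swap b c * Equiv.swap a b := by
  have h1 := Equiv.swap_mul_swap_mul_swap (x := c) (y := b) (z := a) hbc.symm hac.symm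
  have h2 := Equiv.swap_mul_swap_mul_swap (x := a) (y := b) (z := c) hab hac
  rw [Equiv.swap_comm c b, Equiv.swap_comm b a, Equiv.swap_comm a c] at h1
  rw [h1, h2]

theorem gg_braid (m n : ℕ) (i j : Fin (n + 1)) (hi : 1 ≤ i.1) (hj : j.1 = i.1 + 1) :
    gg m n j * gg m n i * gg m n j = gg m n i * gg m n j * gg m n i := by
  have hji : (⟨j.1 - 1, by omega⟩ : Fin (n + 1)) = i := Fin.ext (by simp; omega)
  rw [gg_pos m n i hi, gg_pos m n j (by omega), hji]
  simp only [← map_mul]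
  congr 1
  apply swap_braid <;>
  · intro h'
    have := congrArg Fin.val h'
    try simp only at this
    omega

theorem gg_closure (m n : ℕ) [NeZero m] (P : Submonoid (GG m (n + 1)))
    (hP : ∀ i, gg m n i ∈ P) : P = ⊤ := by
  have h1 : ∀ σ : Equiv.Perm (Fin (n + 1)), (SemidirectProduct.inr σ : GG m (n + 1)) ∈ P := by
    intro σ
    have : (⊤ : Submonoid (Equiv.Perm (Fin (n + 1)))) ≤ P.comap SemidirectProduct.inr := by
      rw [← Equiv.Perm.mclosure_swap_castSucc_succ, Submonoid.closure_le]
      rintro _ ⟨i, rfl⟩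
      exact hP i.succ
    exact this (Submonoid.mem_top σ)
  have h2 : ∀ i, (SemidirectProduct.inl (Pi.mulSingle i (Multiplicative.ofAdd 1)) :
      GG m (n + 1)) ∈ P := by
    intro i
    have : (SemidirectProduct.inl (Pi.mulSingle i (Multiplicative.ofAdd 1)) : GG m (n + 1)) =
        SemidirectProduct.inr (Equiv.swap 0 i) * gg m n 0 *
          SemidirectProduct.inr (Equiv.swap 0 i)⁻¹ := by
      rw [gg_zero m n 0 rfl, ← SemidirectProduct.inl_aut, tt, permHom_single,
        Equiv.swap_apply_left]
    rw [this]
    exact P.mul_mem (P.mul_mem (h1 _) (hP 0)) (h1 _)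
  have h3 : ∀ i (x : Multiplicative (ZMod m)),
      (SemidirectProduct.inl (Pi.mulSingle i x) : GG m (n + 1)) ∈ P := by
    intro i x
    have : x = (Multiplicative.ofAdd (1 : ZMod m)) ^ (x.toAdd.val) := by
      rw [← ofAdd_nsmul]
      simp
    rw [this, Pi.mulSingle_pow, map_pow]
    exact P.pow_mem (h2 i) _
  have h4 : ∀ f, (SemidirectProduct.inl f : GG m (n + 1)) ∈ P := by
    intro f
    have : f ∈ P.comap SemidirectProduct.inl := by
      rw [← Finset.univ_prod_mulSingle f]
      exact Submonoid.prod_mem _ fun i _ => h3 i (f i)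
    exact this
  rw [eq_top_iff]
  intro g _
  rw [← SemidirectProduct.inl_left_mul_inr_right g]
  exact P.mul_mem (h4 _) (h1 _)

theorem exists_hom (n : ℕ) (hm : 0 < m) (hζ : IsPrimitiveRoot ζ m) :
    ∃ φ : CH k m (n + 1) (fun j : Fin m => ζ ^ (j : ℕ)) 1 →ₐ[k] MonoidAlgebra k (GG m (n + 1)),
      Function.Surjective φ := by
  let F : FreeAlgebra k (Fin (n + 1)) →ₐ[k] MonoidAlgebra k (GG m (n + 1)) :=
    FreeAlgebra.lift k fun i => MonoidAlgebra.of k _ (gg m n i)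
  have hF : ∀ i, F (FreeAlgebra.ι k i) = MonoidAlgebra.of k _ (gg m n i) := fun i => by simp [F]
  have hrel : ∀ ⦃x y⦄, Rel k m (n + 1) (fun j : Fin m => ζ ^ (j : ℕ)) 1 x y → F x = F y := by
    intro x y h
    induction h with
    | cyclo i hi =>
      rw [prod_sub_zeta hm hζ, map_sub, map_pow, map_one, map_zero, hF, sub_eq_zero,
        gg_zero m n i hi, ← map_pow, ← map_pow, tt_pow, map_one, map_one]
    | quad i hi =>
      have h1 := congrArg (MonoidAlgebra.of k _) (gg_quad m n i hi)
      rw [map_mul, map_one, ← sub_eq_zero] at h1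
      simp only [map_mul, map_sub, map_add, map_one, map_zero, hF]
      rw [← h1]
      noncomm_ring
    | braid0 i j hi hj =>
      simp only [map_mul, hF]
      simp only [← map_mul, gg_braid0 m n i j hi hj]
    | comm i j h =>
      simp only [map_mul, hF]
      simp only [← map_mul, gg_comm m n i j h]
    | braid i j hi hj =>
      simp only [map_mul, hF]
      simp only [← map_mul, gg_braid m n i j hi hj]
  let φ : CH k m (n + 1) (fun j : Fin m => ζ ^ (j : ℕ)) 1 →ₐ[k] MonoidAlgebra k (GG m (n + 1)) :=
    RingQuot.liftAlgHom k ⟨F, hrel⟩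
  have hφ : ∀ x, φ (proj k m (n + 1) _ 1 x) = F x := fun x =>
    RingQuot.liftAlgHom_mkAlgHom_apply k F hrel x
  refine ⟨φ, ?_⟩
  have : NeZero m := ⟨hm.ne'⟩
  have hP : ∀ g, MonoidAlgebra.of k _ g ∈ φ.range := by
    have := gg_closure m n (φ.range.toSubmonoid.comap (MonoidAlgebra.of k (GG m (n + 1)))) (by
      intro i
      exact ⟨proj k m (n + 1) _ 1 (FreeAlgebra.ι k i), by
        show φ _ = _
        rw [hφ, hF]⟩)
    intro g
    have hg : g ∈ (⊤ : Submonoid (GG m (n + 1))) := trivial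
    rw [← this] at hg
    exact hg
  intro y
  show y ∈ φ.range
  induction y using MonoidAlgebra.induction_on with
  | of g => exact hP g
  | add x y hx hy => exact add_mem hx hy
  | smul r x hx => exact Subalgebra.smul_mem _ hx r

theorem finrank_GG (k : Type) [Field k] (m n : ℕ) [NeZero m] :
    Module.finrank k (MonoidAlgebra k (GG m n)) = m ^ n * n.factorial := by
  rw [Module.finrank_eq_nat_card_basis (MonoidAlgebra.basis (GG m n) k), SemidirectProduct.card]
  simp [Nat.card_eq_fintype_card, Fintype.card_perm]

theorem main_iso (n : ℕ) [NeZero m] (hζ : IsPrimitiveRoot ζ m) :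
    Nonempty (CH k m (n + 1) (fun j : Fin m => ζ ^ (j : ℕ)) 1 ≃ₐ[k]
      MonoidAlgebra k (GG m (n + 1))) := by
  have hm : 0 < m := Nat.pos_of_ne_zero (NeZero.ne m)
  obtain ⟨φ, hφ⟩ := exists_hom n hm hζ
  have hs := span_nf (k := k) hm n.succ_pos hζ
  have hfin : FiniteDimensional k (CH k m (n + 1) (fun j : Fin m => ζ ^ (j : ℕ)) 1) :=
    ⟨⟨_, hs⟩⟩
  have hle : Module.finrank k (CH k m (n + 1) (fun j : Fin m => ζ ^ (j : ℕ)) 1) ≤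
      m ^ (n + 1) * (n + 1).factorial := by
    rw [← finrank_top, ← hs]
    exact (finrank_span_finset_le_card _).trans (card_nf _ _ _)
  have hfin2 : FiniteDimensional k (MonoidAlgebra k (GG m (n + 1))) :=
    Module.Finite.of_surjective φ.toLinearMap hφ
  have hge := LinearMap.finrank_le_finrank_of_surjective (f := φ.toLinearMap) hφ
  have heq := le_antisymm (hle.trans (finrank_GG k m (n + 1)).ge) hge
  have hinj := (LinearMap.injective_iff_surjective_of_finrank_eq_finrank heq
    (f := φ.toLinearMap)).2 hφ
  exact ⟨AlgEquiv.ofBijective φ ⟨hinj, hφ⟩⟩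

end Final

/-- If `ζ ∈ k` is a primitive `m`-th root of unity, then the cyclotomic
Hecke algebra `H_n(1, ζ, …, ζ^{m−1}; 1)` is isomorphic as a `k`-algebra to the group
algebra `k[G(m,1,n)]` of `G(m,1,n) = (ℤ/mℤ)^n ⋊ S_n`. -/
theorem specialization_group_algebra [NeZero m] [NeZero n] (ζ : k)
    (hζ : IsPrimitiveRoot ζ m) :
    Nonempty
      (CH k m n (fun j : Fin m => ζ ^ (j : ℕ)) 1 ≃ₐ[k] MonoidAlgebra k (Gm1n m n)) := by
  obtain ⟨n', rfl⟩ : ∃ n', n = n' + 1 := ⟨n - 1, by have := NeZero.pos n; omega⟩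
  exact main_iso n' hζ

end Cyclo
end
end

section
/- The element c_n = L_1 + L_2 + ⋯ + L_n is central in the cyclotomic Hecke algebra H_n(v_1,…,v_m;q). -/
noncomputable section
open scoped Classical
open scoped Fin.NatCast

namespace Cyclo

variable (k : Type) [Field k] (m n : ℕ) (v : Fin m → k) (q : k)

variable (k : Type) [Field k] (m n : ℕ)

variable (k : Type) [Field k] (m n : ℕ) (v : Fin m → k) (q : k)

open Multipartition

section Helpers

/-- Abstract form of the argument, in an arbitrary `K`-algebra. -/
theorem abstract_comm {K A : Type} [Field K] [Ring A] [Algebra K A] (N : ℕ) (q : K) (hq : q ≠ 0)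
    (g L : ℕ → A) (hL0 : L 0 = g 0)
    (hL : ∀ t, L (t + 1) = q⁻¹ • (g (t + 1) * L t * g (t + 1)))
    (quad : ∀ i, 1 ≤ i → i < N → g i * g i = (q - 1) • g i + q • (1 : A))
    (braid0 : 1 < N → g 0 * g 1 * g 0 * g 1 = g 1 * g 0 * g 1 * g 0)
    (comm : ∀ i j, i + 2 ≤ j → j < N → Commute (g i) (g j))
    (braid : ∀ i, 1 ≤ i → i + 1 < N → g (i + 1) * g i * g (i + 1) = g i * g (i + 1) * g i)
    (j : ℕ) (hj : j < N) : Commute (g j) (∑ t ∈ Finset.range N, L t) := by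
  have c1 : ∀ t i, t + 2 ≤ i → i < N → Commute (g i) (L t) := by
    intro t
    induction t with
    | zero => intro i h1 h2; rw [hL0]; exact (comm 0 i h1 h2).symm
    | succ t ih =>
      intro i h1 h2
      rw [hL]
      have h3 := (comm (t + 1) i h1 h2).symm
      exact ((h3.mul_right (ih i (by omega) h2)).mul_right h3).smul_right _
  have c2base : ∀ i, i + 1 < N → Commute (g i) (L (i + 1)) := by
    intro i hi
    rw [hL]
    refine Commute.smul_right ?_ _
    cases i with
    | zero =>
      rw [hL0]
      have := braid0 hi
      simp only [Commute, SemiconjBy, zero_add]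
      simp only [← mul_assoc]
      exact this
    | succ i =>
      rw [hL, mul_smul_comm, smul_mul_assoc]
      refine Commute.smul_right ?_ _
      have hb := braid (i + 1) (by omega) hi
      have hc := (c1 i (i + 1 + 1) (by omega) hi).eq
      generalize g (i + 1 + 1) = y at *
      generalize g (i + 1) = x at *
      generalize L i = l at *
      change x * (y * (x * l * x) * y) = y * (x * l * x) * y * x
      calc x * (y * (x * l * x) * y) = (x * y * x) * l * x * y := by noncomm_ring
        _ = (y * x * y) * l * x * y := by rw [hb]
        _ = y * x * (y * l) * x * y := by noncomm_ring
        _ = y * x * (l * y) * x * y := by rw [hc]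
        _ = y * x * l * (y * x * y) := by noncomm_ring
        _ = y * x * l * (x * y * x) := by rw [hb]
        _ = y * (x * l * x) * y * x := by noncomm_ring
  have c2 : ∀ i t, i + 1 ≤ t → t < N → Commute (g i) (L t) := by
    intro i t h
    induction t, h using Nat.le_induction with
    | base => exact c2base i
    | succ t h ih =>
      intro ht
      rw [hL]
      have h3 := comm i (t + 1) (by omega) ht
      exact ((h3.mul_right (ih (by omega))).mul_right h3).smul_right _
  have c3 : ∀ i, i + 1 < N → Commute (g (i + 1)) (L i + L (i + 1)) := by
    intro i hi
    rw [hL]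
    have hqd := quad (i + 1) (by omega) hi
    generalize g (i + 1) = x at *
    generalize L i = l at *
    have e1 : x * (q⁻¹ • (x * l * x)) = q⁻¹ • ((q - 1) • (x * l * x)) + l * x := by
      rw [mul_smul_comm, ← mul_assoc, ← mul_assoc, hqd, add_mul, add_mul, smul_add]
      simp only [smul_mul_assoc, one_mul, inv_smul_smul₀ hq]
    have e2 : (q⁻¹ • (x * l * x)) * x = q⁻¹ • ((q - 1) • (x * l * x)) + x * l := by
      rw [smul_mul_assoc, mul_assoc, hqd, mul_add, smul_add]
      simp only [mul_smul_comm, mul_one, inv_smul_smul₀ hq]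
    change x * (l + _) = (l + _) * x
    rw [mul_add, add_mul, e1, e2]
    abel
  have base : Commute (g j) (∑ t ∈ Finset.range (j + 1), L t) := by
    cases j with
    | zero => simp [hL0]
    | succ i =>
      rw [Finset.sum_range_succ, Finset.sum_range_succ, add_assoc]
      refine Commute.add_right (Commute.sum_right _ _ _ ?_) (c3 i hj)
      intro t ht
      exact c1 t _ (by have := Finset.mem_range.1 ht; omega) hj
  have main : ∀ M, j + 1 ≤ M → M ≤ N → Commute (g j) (∑ t ∈ Finset.range M, L t) := by
    intro M h
    induction M, h using Nat.le_induction with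
    | base => intro _; exact base
    | succ M h ih =>
      intro hM
      rw [Finset.sum_range_succ]
      exact (ih (by omega)).add_right (c2 j M h (by omega))
  exact main N hj le_rfl

/-- The quotient map onto the cyclotomic Hecke algebra. -/
def toCH (k : Type) [Field k] (m n : ℕ) (v : Fin m → k) (q : k) :
    FreeAlgebra k (Fin n) →ₐ[k] CH k m n v q :=
  RingQuot.mkAlgHom k (Rel k m n v q)

theorem toCH_rel (k : Type) [Field k] (m n : ℕ) (v : Fin m → k) (q : k)
    {x y : FreeAlgebra k (Fin n)} (h : Rel k m n v q x y) :
    toCH k m n v q x = toCH k m n v q y :=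
  RingQuot.mkAlgHom_rel k h

theorem toCH_surj (k : Type) [Field k] (m n : ℕ) (v : Fin m → k) (q : k) :
    Function.Surjective (toCH k m n v q) :=
  RingQuot.mkAlgHom_surjective k _

theorem gen_eq (k : Type) [Field k] (m n : ℕ) (v : Fin m → k) (q : k) [NeZero n]
    (i : ℕ) (hi : i < n) :
    gen k m n v q i = toCH k m n v q (FreeAlgebra.ι k (⟨i, hi⟩ : Fin n)) := by
  have : ((i : ℕ) : Fin n) = ⟨i, hi⟩ := Fin.ext (Nat.mod_eq_of_lt hi)
  rw [← this]
  rfl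

theorem gen_comm_sum (k : Type) [Field k] (m n : ℕ) (v : Fin m → k) (q : k) [NeZero n]
    (hq : q ≠ 0) (j : ℕ) (hj : j < n) :
    Commute (gen k m n v q j) (∑ t ∈ Finset.range n, murphyAux k m n v q t) := by
  refine abstract_comm n q hq (gen k m n v q) (murphyAux k m n v q) rfl (fun _ => rfl)
    ?_ ?_ ?_ ?_ j hj
  · intro i h1 h2
    have h := toCH_rel k m n v q (Rel.quad ⟨i, h2⟩ h1)
    simp only [map_mul, map_sub, map_add, map_one, map_zero, AlgHom.commutes,
      ← gen_eq] at h
    rw [sub_mul, mul_add, mul_one, ← Algebra.smul_def, smul_add, sub_eq_zero] at h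
    rw [eq_sub_of_add_eq h, sub_smul, one_smul]
    abel
  · intro h1
    have h := toCH_rel k m n v q (Rel.braid0 ⟨0, by omega⟩ ⟨1, h1⟩ rfl rfl)
    simpa only [map_mul, ← gen_eq] using h
  · intro i j h h2
    have h := toCH_rel k m n v q (Rel.comm ⟨i, by omega⟩ ⟨j, h2⟩ h)
    change _ * _ = _ * _
    simpa only [map_mul, ← gen_eq] using h
  · intro i h h2
    have h := toCH_rel k m n v q (Rel.braid ⟨i, by omega⟩ ⟨i + 1, h2⟩ h rfl)
    simpa only [map_mul, ← gen_eq] using h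

end Helpers

/-- The element `c_n = L_1 + ⋯ + L_n` is central in the cyclotomic
Hecke algebra `H_n(v_1,…,v_m;q)`. -/
theorem sum_murphy_central [NeZero m] [NeZero n] (hq : q ≠ 0) (x : CH k m n v q) :
    (∑ i : Fin n, murphy k m n v q i) * x = x * ∑ i : Fin n, murphy k m n v q i := by
  have hs : (∑ i : Fin n, murphy k m n v q i)
      = ∑ t ∈ Finset.range n, murphyAux k m n v q t :=
    Fin.sum_univ_eq_sum_range (fun t => murphyAux k m n v q t) n
  rw [hs]
  obtain ⟨y, rfl⟩ := toCH_surj k m n v q x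
  have key : Commute (toCH k m n v q y) (∑ t ∈ Finset.range n, murphyAux k m n v q t) := by
    induction y using FreeAlgebra.induction with
    | grade0 r => rw [AlgHom.commutes]; exact Algebra.commutes r _
    | grade1 i =>
      have := gen_comm_sum k m n v q hq i.1 i.2
      rwa [gen_eq k m n v q i.1 i.2] at this
    | mul a b ha hb => rw [map_mul]; exact ha.mul_left hb
    | add a b ha hb => rw [map_add]; exact ha.add_left hb
  exact key.symm

end Cyclo
end
end
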